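/- Let U, C : ℝ^L → ℝ be twice continuously differentiable, U concave and strictly increasing in each coordinate, C convex and strictly increasing in each coordinate. Fix s^(0) with C(s^(0)) ≤ 0, and let J be the set of the J coordinates whose sensitivities (∂U/∂s_i)/(∂C/∂s_i) at s^(0) are strictly larger than the sensitivities of all coordinates not in J. Define Ũ(s_J) = U(s_J, s_K^(0)). Then there exists a neighborhood N of s^(0) such that for every s ∈ N that is efficiently reachable from s^(0) with Ũ(s_J) > Ũ(s_J^(0)), we have U(s) > U(s^(0)). -/

import Mathlib

def StrictIncEach {L : ℕ} (f : (Fin L → ℝ) → ℝ) : Prop :=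
  ∀ s : Fin L → ℝ, ∀ i : Fin L, ∀ x : ℝ, s i < x → f s < f (Function.update s i x)

/-- `s` is efficiently reachable from `s0` with full-state proxy `Ut`
(depending only on coordinates in `J`). -/
def EffReachable {L : ℕ} (C : (Fin L → ℝ) → ℝ)
    (Ut : (Fin L → ℝ) → ℝ) (s0 s : Fin L → ℝ) : Prop :=
  C s ≤ 0 ∧
  ¬ ∃ s' : Fin L → ℝ, C s' ≤ 0 ∧ Ut s ≤ Ut s' ∧
      (∀ i : Fin L, |s' i - s0 i| ≤ |s i - s0 i|) ∧
      (∃ i : Fin L, |s' i - s0 i| < |s i - s0 i|)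

/-- Sensitivity of coordinate `i` of `U` relative to `C` at state `s`. -/
noncomputable def sens {L : ℕ} (U C : (Fin L → ℝ) → ℝ) (s : Fin L → ℝ) (i : Fin L) : ℝ :=
  fderiv ℝ U s (Pi.single i 1) / fderiv ℝ C s (Pi.single i 1)

open Filter Topology

theorem ConvexOn.add_fderiv_le {E : Type*} [NormedAddCommGroup E] [NormedSpace ℝ E]
    {f : E → ℝ} (hf : ConvexOn ℝ Set.univ f) {x : E} (hd : DifferentiableAt ℝ f x) (y : E) :
    f x + fderiv ℝ f x (y - x) ≤ f y := by
  have hline : HasDerivAt (fun t : ℝ => f (AffineMap.lineMap x y t)) (fderiv ℝ f x (y - x)) 0 := by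
    have h1 : HasDerivAt (AffineMap.lineMap x y : ℝ → E) (y - x) 0 := AffineMap.hasDerivAt_lineMap
    have h2 : HasFDerivAt f (fderiv ℝ f x) ((AffineMap.lineMap x y : ℝ → E) 0) := by
      simpa using hd.hasFDerivAt
    exact h2.comp_hasDerivAt 0 h1
  have hconv : ConvexOn ℝ Set.univ (fun t : ℝ => f (AffineMap.lineMap x y t)) :=
    hf.comp_affineMap (AffineMap.lineMap x y)
  have h := hconv.le_slope_of_hasDerivAt (Set.mem_univ 0) (Set.mem_univ 1) one_pos hline
  simp [slope_def_field] at h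
  simp
  linarith

theorem ConcaveOn.le_add_fderiv {E : Type*} [NormedAddCommGroup E] [NormedSpace ℝ E]
    {f : E → ℝ} (hf : ConcaveOn ℝ Set.univ f) {x : E} (hd : DifferentiableAt ℝ f x) (y : E) :
    f y ≤ f x + fderiv ℝ f x (y - x) := by
  have h := hf.neg.add_fderiv_le hd.neg y
  rw [fderiv_neg] at h
  simp only [Pi.neg_apply, _root_.neg_apply] at h
  linarith

theorem StrictIncEach.lt_add_single {L : ℕ} {f : (Fin L → ℝ) → ℝ} (hf : StrictIncEach f)
    (x : Fin L → ℝ) (i : Fin L) : f x < f (x + Pi.single i 1) := by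
  have h := hf x i (x i + 1) (by linarith)
  convert h using 2
  ext k
  rcases eq_or_ne k i with rfl | hk <;> simp [*]

theorem StrictIncEach.fderiv_single_pos_of_convexOn {L : ℕ} {f : (Fin L → ℝ) → ℝ}
    (hf : StrictIncEach f) (hc : ConvexOn ℝ Set.univ f) {x : Fin L → ℝ}
    (hd : DifferentiableAt ℝ f x) (i : Fin L) : 0 < fderiv ℝ f x (Pi.single i 1) := by
  have h1 := hc.add_fderiv_le hd (x - Pi.single i 1)
  have h2 := hf.lt_add_single (x - Pi.single i 1) i
  rw [sub_add_cancel] at h2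
  rw [show x - Pi.single i 1 - x = -Pi.single i (1 : ℝ) by abel, map_neg] at h1
  linarith

theorem StrictIncEach.fderiv_single_pos_of_concaveOn {L : ℕ} {f : (Fin L → ℝ) → ℝ}
    (hf : StrictIncEach f) (hc : ConcaveOn ℝ Set.univ f) {x : Fin L → ℝ}
    (hd : DifferentiableAt ℝ f x) (i : Fin L) : 0 < fderiv ℝ f x (Pi.single i 1) := by
  have h1 := hc.le_add_fderiv hd (x + Pi.single i 1)
  have h2 := hf.lt_add_single x i
  rw [add_sub_cancel_left] at h1
  linarith

theorem ContinuousLinearMap.apply_eq_sum_single {L : ℕ} (φ : (Fin L → ℝ) →L[ℝ] ℝ)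
    (v : Fin L → ℝ) : φ v = ∑ i, φ (Pi.single i 1) * v i := by
  conv_lhs => rw [pi_eq_sum_univ' v]
  simp only [map_sum, map_smul, smul_eq_mul]
  exact Finset.sum_congr rfl fun i _ => mul_comm _ _

theorem eventually_lt_add_smul_of_fderiv_pos {E : Type*} [NormedAddCommGroup E]
    [NormedSpace ℝ E] {f : E → ℝ} {x v : E} (hd : DifferentiableAt ℝ f x)
    (hv : 0 < fderiv ℝ f x v) : ∀ᶠ t in 𝓝[>] (0 : ℝ), f x < f (x + t • v) := by
  have hl : HasDerivAt (fun t : ℝ => f (x + t • v)) (fderiv ℝ f x v) 0 :=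
    hd.hasFDerivAt.hasLineDerivAt v
  have h := (hl.tendsto_slope_zero_right).eventually_const_lt hv
  filter_upwards [h, self_mem_nhdsWithin] with t ht ht0
  have ht0 : 0 < t := ht0
  simp only [zero_add, zero_smul, add_zero, smul_eq_mul] at ht
  have := (pos_iff_pos_of_mul_pos ht).1 (inv_pos.2 ht0)
  linarith

/-- At an efficiently reachable state, no coordinate outside the proxy has been raised. -/
theorem EffReachable.le_of_notMem {L : ℕ} {C V : (Fin L → ℝ) → ℝ} {s0 s : Fin L → ℝ}
    (h : EffReachable C V s0 s) (hC : StrictIncEach C) {k : Fin L}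
    (hV : ∀ x, V (Function.update s k x) = V s) : s k ≤ s0 k := by
  by_contra! hk
  refine h.2 ⟨Function.update s k (s0 k), ?_, (hV _).ge, fun i => ?_, k, ?_⟩
  · have := hC (Function.update s k (s0 k)) k (s k) (by simpa using hk)
    simp only [Function.update_idem, Function.update_eq_self] at this
    linarith [h.1]
  · rcases eq_or_ne i k with rfl | hi <;> simp [*]
  · simpa using sub_ne_zero.2 hk.ne'

/-- If a coordinate outside the proxy has been lowered, the constraint is tight. -/
theorem EffReachable.eq_zero_of_lt {L : ℕ} {C V : (Fin L → ℝ) → ℝ} {s0 s : Fin L → ℝ}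
    (h : EffReachable C V s0 s) (hC : Continuous C) {k : Fin L}
    (hV : ∀ x, V (Function.update s k x) = V s) (hk : s k < s0 k) : C s = 0 := by
  refine h.1.antisymm (not_lt.1 fun hneg => ?_)
  have hcont : Tendsto (fun x => C (Function.update s k x)) (𝓝[>] (s k)) (𝓝 (C s)) := by
    have : Continuous fun x => C (Function.update s k x) :=
      hC.comp (continuous_const.update k continuous_id)
    simpa using (this.tendsto (s k)).mono_left nhdsWithin_le_nhds
  obtain ⟨x, hx, hx1, hx2⟩ :=
    ((hcont.eventually_lt_const hneg).and (Ioo_mem_nhdsGT hk)).exists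
  have hlt : |x - s0 k| < |s k - s0 k| := by
    rw [abs_of_neg (by linarith), abs_of_neg (by linarith)]
    linarith
  refine h.2 ⟨Function.update s k x, hx.le, (hV _).ge, fun i => ?_, k, by simpa using hlt⟩
  rcases eq_or_ne i k with rfl | hi
  · simpa using hlt.le
  · simp [hi]

/-- Otherwise both `p` and `n` could be moved back towards `s0` at a smaller cost. -/
theorem EffReachable.mul_le_mul {L : ℕ} {C V : (Fin L → ℝ) → ℝ} {s0 s : Fin L → ℝ}
    (h : EffReachable C V s0 s) (hC : DifferentiableAt ℝ C s) (hV : DifferentiableAt ℝ V s)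
    {p n : Fin L} (hp : s0 p < s p) (hn : s n < s0 n)
    (hCn : 0 < fderiv ℝ C s (Pi.single n 1)) (hVn : 0 < fderiv ℝ V s (Pi.single n 1))
    (hVp : 0 < fderiv ℝ V s (Pi.single p 1)) :
    fderiv ℝ V s (Pi.single n 1) * fderiv ℝ C s (Pi.single p 1) ≤
      fderiv ℝ V s (Pi.single p 1) * fderiv ℝ C s (Pi.single n 1) := by
  by_contra! hlt
  have hpn : p ≠ n := by
    rintro rfl
    linarith
  obtain ⟨θ, hθ1, hθ2⟩ := exists_between
    ((div_lt_div_iff₀ hVn hCn).2 (hlt.trans_eq (mul_comm _ _)))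
  have hθ0 : 0 < θ := (div_pos hVp hVn).trans hθ1
  rw [div_lt_iff₀ hVn] at hθ1
  rw [lt_div_iff₀ hCn] at hθ2
  set v : Fin L → ℝ := θ • Pi.single n 1 - Pi.single p 1 with hv
  have hvV : 0 < fderiv ℝ V s v := by
    simp only [hv, map_sub, map_smul, smul_eq_mul]
    linarith
  have hvC : 0 < fderiv ℝ (-C) s v := by
    simp only [fderiv_neg, _root_.neg_apply, hv, map_sub, map_smul, smul_eq_mul]
    linarith
  have e1 : ∀ᶠ t in 𝓝[>] (0 : ℝ), t < s p - s0 p :=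
    nhdsWithin_le_nhds (Iio_mem_nhds (by linarith))
  have e2 : ∀ᶠ t in 𝓝[>] (0 : ℝ), t < (s0 n - s n) / θ :=
    nhdsWithin_le_nhds (Iio_mem_nhds (div_pos (by linarith) hθ0))
  obtain ⟨t, htV, htC, ht1, ht2, ht0⟩ :=
    ((eventually_lt_add_smul_of_fderiv_pos hV hvV).and
      ((eventually_lt_add_smul_of_fderiv_pos hC.neg hvC).and
        (e1.and (e2.and self_mem_nhdsWithin)))).exists
  have ht0 : 0 < t := ht0
  rw [lt_div_iff₀ hθ0] at ht2
  have htθ : 0 < t * θ := by positivity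
  simp only [Pi.neg_apply, neg_lt_neg_iff] at htC
  have hdp : |(s + t • v) p - s0 p| < |s p - s0 p| := by
    have : (s + t • v) p = s p - t := by simp [hv, hpn]; ring
    rw [this, abs_of_pos (by linarith), abs_of_pos (by linarith)]
    linarith
  have hdn : |(s + t • v) n - s0 n| < |s n - s0 n| := by
    have : (s + t • v) n = s n + t * θ := by simp [hv, hpn.symm]
    rw [this, abs_of_neg (by linarith), abs_of_neg (by linarith)]
    linarith
  refine h.2 ⟨s + t • v, htC.le.trans h.1, htV.le, fun i => ?_, p, hdp⟩
  by_cases hip : i = p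
  · exact hip ▸ hdp.le
  by_cases hin : i = n
  · exact hin ▸ hdn.le
  · simp [hv, hip, hin]

/-- A change `d` of nonnegative total cost `∑ c i * d i` which raises only coordinates whose
benefit-cost ratio is at least that of every lowered coordinate has positive benefit. -/
theorem sum_mul_pos_of_ratio_le {ι : Type*} [Fintype ι] {u c d : ι → ℝ}
    (hu : ∀ i, 0 < u i) (hc : ∀ i, 0 < c i) (hpos : ∃ p, 0 < d p)
    (hle : ∀ p n, 0 < d p → d n < 0 → u n * c p ≤ u p * c n)
    {k : ι} (hk : d k < 0) (hlt : ∀ p, 0 < d p → u k * c p < u p * c k)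
    (hsum : 0 ≤ ∑ i, c i * d i) : 0 < ∑ i, u i * d i := by
  classical
  obtain ⟨p, hp, hmin⟩ := (Finset.univ.filter fun i => 0 < d i).exists_min_image
    (fun i => u i / c i) (by simpa [Finset.Nonempty] using hpos)
  simp only [Finset.mem_filter, Finset.mem_univ, true_and] at hp hmin
  have key : ∑ i, u p * (c i * d i) < ∑ i, c p * (u i * d i) := by
    refine Finset.sum_lt_sum (fun i _ => ?_) ⟨k, Finset.mem_univ k, ?_⟩
    · rcases lt_trichotomy (d i) 0 with hi | hi | hi
      · nlinarith [hle p i hp hi]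
      · simp [hi]
      · have := (div_le_div_iff₀ (hc p) (hc i)).1 (hmin i hi)
        nlinarith
    · nlinarith [hlt p hp]
  rw [← Finset.mul_sum, ← Finset.mul_sum] at key
  exact pos_of_mul_pos_right ((mul_nonneg (hu p).le hsum).trans_lt key) (hc p).le

/-- The state agreeing with `s` on `J` and with `s0` off `J`. -/
def proxyState {L : ℕ} (J : Finset (Fin L)) (s0 s : Fin L → ℝ) : Fin L → ℝ :=
  fun i => if i ∈ J then s i else s0 i

theorem continuous_proxyState {L : ℕ} (J : Finset (Fin L)) (s0 : Fin L → ℝ) :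
    Continuous (proxyState J s0) := by
  refine continuous_pi fun i => ?_
  unfold proxyState
  split_ifs <;> fun_prop

theorem proxyState_self {L : ℕ} (J : Finset (Fin L)) (s0 : Fin L → ℝ) :
    proxyState J s0 s0 = s0 := by
  ext i
  simp [proxyState]

theorem proxyState_update {L : ℕ} {J : Finset (Fin L)} {k : Fin L} (hk : k ∉ J)
    (s0 s : Fin L → ℝ) (x : ℝ) :
    proxyState J s0 (Function.update s k x) = proxyState J s0 s := by
  ext i
  by_cases hi : i ∈ J
  · simp [proxyState, hi, ne_of_mem_of_not_mem hi hk]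
  · simp [proxyState, hi]

theorem hasFDerivAt_proxyState {L : ℕ} (J : Finset (Fin L)) (s0 s : Fin L → ℝ) :
    HasFDerivAt (proxyState J s0) (ContinuousLinearMap.pi fun i =>
      if i ∈ J then ContinuousLinearMap.proj (R := ℝ) (φ := fun _ : Fin L => ℝ) i else 0) s := by
  refine hasFDerivAt_pi.2 fun i => ?_
  unfold proxyState
  split_ifs
  · exact hasFDerivAt_apply i s
  · exact hasFDerivAt_const _ _

theorem fderiv_comp_proxyState_single {L : ℕ} {U : (Fin L → ℝ) → ℝ} {J : Finset (Fin L)}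
    {s0 s : Fin L → ℝ} (hU : DifferentiableAt ℝ U (proxyState J s0 s)) {j : Fin L}
    (hj : j ∈ J) :
    fderiv ℝ (U ∘ proxyState J s0) s (Pi.single j 1) =
      fderiv ℝ U (proxyState J s0 s) (Pi.single j 1) := by
  rw [(hU.hasFDerivAt.comp s (hasFDerivAt_proxyState J s0 s)).fderiv,
    ContinuousLinearMap.comp_apply]
  congr 1
  ext i
  rcases eq_or_ne i j with rfl | hi
  · simp [hj]
  · by_cases hiJ : i ∈ J <;> simp [hi, hiJ]

/-- Local improvement theorem: proxying on the most sensitive attributes guarantees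
local true-utility gains under efficient optimization. -/
theorem stmt_8 {L : ℕ} (U C : (Fin L → ℝ) → ℝ)
    (hU2 : ContDiff ℝ 2 U) (hC2 : ContDiff ℝ 2 C)
    (hUconc : ConcaveOn ℝ Set.univ U) (hCconv : ConvexOn ℝ Set.univ C)
    (hUm : StrictIncEach U) (hCm : StrictIncEach C)
    (s0 : Fin L → ℝ) (hs0 : C s0 ≤ 0)
    (J : Finset (Fin L)) (hJne : J.Nonempty) (hJprop : J ≠ Finset.univ)
    (hsens : ∀ j ∈ J, ∀ k ∉ J, sens U C s0 k < sens U C s0 j)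
    (Ut : (Fin L → ℝ) → ℝ)
    (hUt : ∀ s : Fin L → ℝ, Ut s = U (fun i => if i ∈ J then s i else s0 i)) :
    ∃ N ∈ nhds s0, ∀ s ∈ N,
      EffReachable C Ut s0 s → Ut s0 < Ut s → U s0 < U s := by
  have hUd : Differentiable ℝ U := hU2.differentiable (by norm_num)
  have hCd : Differentiable ℝ C := hC2.differentiable (by norm_num)
  have hUpos x i := hUm.fderiv_single_pos_of_concaveOn hUconc (hUd x) i
  have hCpos x i := hCm.fderiv_single_pos_of_convexOn hCconv (hCd x) i
  obtain rfl : Ut = U ∘ proxyState J s0 := funext hUt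
  have hgap : ∀ᶠ s in 𝓝 s0, ∀ j ∈ J, ∀ k ∉ J,
      fderiv ℝ U s (Pi.single k 1) * fderiv ℝ C s (Pi.single j 1) <
        fderiv ℝ U (proxyState J s0 s) (Pi.single j 1) * fderiv ℝ C s (Pi.single k 1) := by
    have hU' := hU2.continuous_fderiv (by norm_num)
    have hC' := hC2.continuous_fderiv (by norm_num)
    have hP := hU'.comp (continuous_proxyState J s0)
    simp only [eventually_all, Function.comp_def] at hP ⊢
    intro j hj k hk
    refine ContinuousAt.eventually_lt (by fun_prop) (by fun_prop) ?_
    rw [proxyState_self]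
    exact (div_lt_div_iff₀ (hCpos _ _) (hCpos _ _)).1 (hsens j hj k hk)
  refine ⟨_, hgap, fun s hs heff hgain => ?_⟩
  have hupd : ∀ k ∉ J, ∀ x, (U ∘ proxyState J s0) (Function.update s k x) =
      (U ∘ proxyState J s0) s := fun k hk x => by
    simp only [Function.comp_apply, proxyState_update hk]
  have hK : ∀ k ∉ J, s k ≤ s0 k := fun k hk => heff.le_of_notMem hCm (hupd k hk)
  simp only [Function.comp_apply, proxyState_self] at hgain
  by_cases hex : ∃ k ∉ J, s k < s0 k
  swap
  · push Not at hex
    have : proxyState J s0 s = s := by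
      ext i
      by_cases hi : i ∈ J
      · simp [proxyState, hi]
      · simp [proxyState, hi, (hK i hi).antisymm (hex i hi)]
    rwa [this] at hgain
  obtain ⟨k, hkJ, hk⟩ := hex
  have hC0 := heff.eq_zero_of_lt hCd.continuous (hupd k hkJ) hk
  have hposJ : ∀ p, 0 < s p - s0 p → p ∈ J := fun p hp => by
    by_contra hpJ
    linarith [hK p hpJ]
  have hpos : ∃ p, 0 < s p - s0 p := by
    by_contra! hall
    have h1 := hUconc.le_add_fderiv (hUd s0) (proxyState J s0 s)
    rw [ContinuousLinearMap.apply_eq_sum_single] at h1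
    have h2 : ∑ i, fderiv ℝ U s0 (Pi.single i 1) * (proxyState J s0 s - s0) i ≤ 0 := by
      refine Finset.sum_nonpos fun i _ => mul_nonpos_of_nonneg_of_nonpos (hUpos _ _).le ?_
      by_cases hi : i ∈ J
      · simpa [proxyState, hi] using hall i
      · simp [proxyState, hi]
    linarith
  have hcost : 0 ≤ ∑ i, fderiv ℝ C s (Pi.single i 1) * (s i - s0 i) := by
    have h1 := hCconv.add_fderiv_le (hCd s) s0
    rw [← neg_sub s s0, map_neg, ContinuousLinearMap.apply_eq_sum_single] at h1
    simp only [Pi.sub_apply] at h1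
    linarith
  have hmain := sum_mul_pos_of_ratio_le
    (u := fun i => fderiv ℝ U (if i ∈ J then proxyState J s0 s else s) (Pi.single i 1))
    (fun i => hUpos _ i) (hCpos s) hpos ?_ (sub_neg.2 hk) ?_ hcost
  · have h1 := hUconc.le_add_fderiv (hUd (proxyState J s0 s)) s0
    have h2 := hUconc.le_add_fderiv (hUd s) (proxyState J s0 s)
    rw [ContinuousLinearMap.apply_eq_sum_single] at h1 h2
    have h3 : ∑ i, fderiv ℝ U (if i ∈ J then proxyState J s0 s else s) (Pi.single i 1) *
          (s i - s0 i) =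
        -(∑ i, fderiv ℝ U (proxyState J s0 s) (Pi.single i 1) * (s0 - proxyState J s0 s) i) -
          ∑ i, fderiv ℝ U s (Pi.single i 1) * (proxyState J s0 s - s) i := by
      rw [← Finset.sum_neg_distrib, ← Finset.sum_sub_distrib]
      refine Finset.sum_congr rfl fun i _ => ?_
      by_cases hi : i ∈ J <;> simp [proxyState, hi] <;> ring
    linarith
  · intro p n hp hn
    have hpJ := hposJ p hp
    by_cases hnJ : n ∈ J
    · have hVd : DifferentiableAt ℝ (U ∘ proxyState J s0) s :=
        (hUd _).comp s (hasFDerivAt_proxyState J s0 s).differentiableAt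
      have h := heff.mul_le_mul (hCd s) hVd (sub_pos.1 hp) (sub_neg.1 hn) (hCpos s n)
      simp only [fderiv_comp_proxyState_single (hUd _) hpJ,
        fderiv_comp_proxyState_single (hUd _) hnJ] at h
      simpa [hpJ, hnJ] using h (hUpos _ n) (hUpos _ p)
    · simpa [hpJ, hnJ] using (hs p hpJ n hnJ).le
  · intro p hp
    have hpJ := hposJ p hp
    simpa [hpJ, hkJ] using hs p hpJ k hkJ
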